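/- arXiv:1301.4845 — 3 statements merged into one kernel-verified Lean document; each statement's English description precedes it below -/
import Mathlib

section
/- Let G be a generalised sequential game with moves X_1, …, X_n, outcome set R, outcome function q : ∏_{i=1}^n X_i → R and quantifiers φ_1, …, φ_n, and let π be an optimal strategy for G. Then π is a generalised Nash equilibrium of the normal form G†: for every 1 ≤ i ≤ n, q(π†) ∈ φ_i(λ x ∈ X_i. q((π(i↦ λσ. x))†)), i.e. q†(π) ∈ φ_i†(λ f. q†(π(i↦f))) for every i. -/
/-- The full play of a sequential game determined by the strategy `π`, given that
the coordinates `j` with `j.val < m` are prescribed by `s` and all later moves are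
made according to `π` (each `π j` consults the play at all earlier coordinates). -/
def seqPlay {n : ℕ} {X : Fin n → Type*}
    (π : ∀ i : Fin n, (∀ j : Fin n, j < i → X j) → X i)
    (m : ℕ) (s : ∀ j : Fin n, X j) (j : Fin n) : X j :=
  if j.val < m then s j else π j (fun k hk => seqPlay π m s k)
  termination_by j.val
  decreasing_by exact hk

/-- The strategic play `π†` of a strategy `π`: every move is made according to `π`. -/
def stratPlay {n : ℕ} {X : Fin n → Type*}
    (π : ∀ i : Fin n, (∀ j : Fin n, j < i → X j) → X i) (j : Fin n) : X j :=
  π j (fun k hk => stratPlay π k)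
  termination_by j.val
  decreasing_by exact hk

/-! A play in which players `m, m + 1, …` follow `π` is determined by its first `m` moves. The play
of the deviation `π(i ↦ τ)` agrees with `π†` before player `i`, and all players after `i` follow
`π`, so it is the continuation by `π` of `π†` with its `i`-th move changed. Hence the equilibrium
condition for player `i` is the optimality condition at the partial play of `π†` reaching `i`. -/

section Plays

variable {n : ℕ} {X : Fin n → Type*} {π π' : ∀ i : Fin n, (∀ j : Fin n, j < i → X j) → X i}

theorem seqPlay_eq_of_forall {m : ℕ} {s p : ∀ j : Fin n, X j}
    (prescribed : ∀ j : Fin n, j.val < m → p j = s j)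
    (follows : ∀ j : Fin n, m ≤ j.val → p j = π j (fun k _ => p k)) :
    seqPlay π m s = p := by
  funext j
  induction j using WellFoundedLT.induction with
  | ind j ih =>
    rw [seqPlay]
    split_ifs with hj
    · exact (prescribed j hj).symm
    · rw [follows j (not_lt.mp hj)]
      congr 1
      funext k hk
      exact ih k hk

theorem stratPlay_congr {j : Fin n} (h : ∀ k ≤ j, π k = π' k) :
    stratPlay π j = stratPlay π' j := by
  induction j using WellFoundedLT.induction with
  | ind j ih =>
    rw [stratPlay, stratPlay, h j le_rfl]
    congr 1
    funext k hk
    exact ih k hk fun l hl => h l (hl.trans hk.le)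

variable (π)

theorem seqPlay_stratPlay (m : ℕ) : seqPlay π m (stratPlay π) = stratPlay π :=
  seqPlay_eq_of_forall (fun _ _ => rfl) fun j _ => by rw [stratPlay]

theorem stratPlay_update_of_lt {i j : Fin n} (τ : (∀ k : Fin n, k < i → X k) → X i)
    (hji : j < i) : stratPlay (Function.update π i τ) j = stratPlay π j :=
  stratPlay_congr fun _ hkj => Function.update_of_ne (hkj.trans_lt hji).ne _ _

theorem stratPlay_update_self (i : Fin n) (τ : (∀ k : Fin n, k < i → X k) → X i) :
    stratPlay (Function.update π i τ) i = τ (fun k _ => stratPlay π k) := by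
  rw [stratPlay, Function.update_self]
  congr 1
  funext k hk
  exact stratPlay_update_of_lt π τ hk

theorem seqPlay_update_stratPlay (i : Fin n) (τ : (∀ k : Fin n, k < i → X k) → X i) :
    seqPlay π (i.val + 1)
        (Function.update (stratPlay π) i (τ fun k _ => stratPlay π k)) =
      stratPlay (Function.update π i τ) := by
  apply seqPlay_eq_of_forall
  · intro j hj
    obtain hji | rfl := (Fin.le_def.mpr (Nat.le_of_lt_succ hj)).lt_or_eq
    · rw [Function.update_of_ne hji.ne, stratPlay_update_of_lt π τ hji]
    · rw [Function.update_self, stratPlay_update_self]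
  · intro j hj
    have hij : i < j := hj
    rw [stratPlay, Function.update_of_ne hij.ne']

theorem stmt_2_general {R : Type*} (q : (∀ i : Fin n, X i) → R)
    (φ : ∀ i : Fin n, (X i → R) → Set R) :
    (∀ i : Fin n,
      q (stratPlay π) ∈
        φ i (fun x => q (stratPlay (Function.update π i (fun _ => x))))) ↔
    ∀ i : Fin n,
      q (seqPlay π i.val (stratPlay π)) ∈
        φ i (fun x => q (seqPlay π (i.val + 1) (Function.update (stratPlay π) i x))) := by
  simp only [seqPlay_stratPlay, ← seqPlay_update_stratPlay]

end Plays

/-- Normal form soundness: an optimal strategy π of a generalised sequential game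
(with moves `X i`, outcome set `R`, outcome function `q` and quantifiers `φ i`)
is a generalised Nash equilibrium of the normal form: for every player `i`,
`q(π†) ∈ φ_i (fun x => q ((π(i ↦ fun _ => x))†))`. -/
theorem stmt_2 {n : ℕ} {X : Fin n → Type*} [∀ i, Nonempty (X i)] {R : Type*}
    (q : (∀ i : Fin n, X i) → R)
    (φ : ∀ i : Fin n, (X i → R) → Set R)
    (π : ∀ i : Fin n, (∀ j : Fin n, j < i → X j) → X i)
    (hopt : ∀ (i : Fin n) (s : ∀ j : Fin n, X j),
      q (seqPlay π i.val s) ∈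
        φ i (fun x => q (seqPlay π (i.val + 1) (Function.update s i x)))) :
    ∀ i : Fin n,
      q (stratPlay π) ∈
        φ i (fun x => q (stratPlay (Function.update π i (fun _ => x)))) :=
  (stmt_2_general π q φ).mpr fun i => hopt i (stratPlay π)
end

section
/- Let X, Y, R be nonempty sets, let q : X × Y → R, and let φ : (X → R) → R and ψ : (Y → R) → R be single-valued total quantifiers attained by selection functions ε : (X → R) → X and δ : (Y → R) → Y, i.e. p(ε(p)) = φ(p) for all p : X → R and p(δ(p)) = ψ(p) for all p : Y → R. Define a = ε(λx. q(x, δ(λy. q(x,y)))) and b = δ(λy. q(ε(λx. q(x,y)), y)) (the binary Berardi–Bezem–Coquand functional applied to (ε, δ, q)). Then (a, b) is a ψ-φ strategy profile: (i) for every f : X → Y satisfying q(x, f(x)) = ψ(λy. q(x,y)) for all x ∈ X, one has q(a, f(a)) = φ(λx. q(x, f(x))); and (ii) for every g : Y → X satisfying q(g(y), y) = φ(λx. q(x,y)) for all y ∈ Y, one has q(g(b), b) = ψ(λy. q(g(y), y)). -/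
section Game

variable {X Y R : Type*} {φ : (X → R) → R} {ψ : (Y → R) → R}
  {ε : (X → R) → X} {δ : (Y → R) → Y}

/-- The selection function `ε` attains the single-valued total quantifier `φ`. -/
def Attains (ε : (X → R) → X) (φ : (X → R) → R) : Prop :=
  ∀ p : X → R, p (ε p) = φ p

/-- The move `a` is a ψ-φ strategy for player 1 in the game with curried outcome function `q`.
Strategies for player 2 are those for player 1 after exchanging the players: they are expressed
by `IsStrategy (fun y x => q x y) ψ φ`. -/
def IsStrategy (q : X → Y → R) (φ : (X → R) → R) (ψ : (Y → R) → R) (a : X) : Prop :=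
  ∀ f : X → Y, (∀ x, q x (f x) = ψ (q x)) → q a (f a) = φ (fun x => q x (f x))

/-- Player 1's component of the binary Berardi–Bezem–Coquand functional; player 2's component is
`bbcMove δ ε (fun y x => q x y)`. -/
def bbcMove (ε : (X → R) → X) (δ : (Y → R) → Y) (q : X → Y → R) : X :=
  ε (fun x => q x (δ (q x)))

theorem Attains.isStrategy (hε : Attains ε φ) (q : X → Y → R) (ψ : (Y → R) → R) :
    IsStrategy q φ ψ (ε (fun x => ψ (q x))) := by
  intro f hf
  have outcome_eq : (fun x => q x (f x)) = fun x => ψ (q x) := funext hf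
  rw [← outcome_eq]
  exact hε (fun x => q x (f x))

theorem Attains.bbcMove_eq (hδ : Attains δ ψ) (ε : (X → R) → X) (q : X → Y → R) :
    bbcMove ε δ q = ε (fun x => ψ (q x)) :=
  congrArg ε (funext fun x => hδ (q x))

theorem isStrategy_bbcMove (hε : Attains ε φ) (hδ : Attains δ ψ) (q : X → Y → R) :
    IsStrategy q φ ψ (bbcMove ε δ q) := by
  rw [hδ.bbcMove_eq]
  exact hε.isStrategy q ψ

end Game

/-- The binary Berardi–Bezem–Coquand functional computes a ψ-φ strategy profile
in a 2-player game with single outcome space, when the single-valued total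
quantifiers φ and ψ are attained by selection functions ε and δ. -/
theorem stmt_3 {X Y R : Type*} [Nonempty X] [Nonempty Y] [Nonempty R]
    (q : X × Y → R) (φ : (X → R) → R) (ψ : (Y → R) → R)
    (ε : (X → R) → X) (δ : (Y → R) → Y)
    (hε : ∀ p : X → R, p (ε p) = φ p)
    (hδ : ∀ p : Y → R, p (δ p) = ψ p) :
    (∀ f : X → Y, (∀ x, q (x, f x) = ψ (fun y => q (x, y))) →
      q (ε (fun x => q (x, δ (fun y => q (x, y)))),
         f (ε (fun x => q (x, δ (fun y => q (x, y)))))) =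
        φ (fun x => q (x, f x))) ∧
    (∀ g : Y → X, (∀ y, q (g y, y) = φ (fun x => q (x, y))) →
      q (g (δ (fun y => q (ε (fun x => q (x, y)), y))),
         δ (fun y => q (ε (fun x => q (x, y)), y))) =
        ψ (fun y => q (g y, y))) :=
  ⟨isStrategy_bbcMove hε hδ (fun x y => q (x, y)),
    isStrategy_bbcMove hδ hε (fun y x => q (x, y))⟩
end

section
/- Let q_X, q_Y : [0,1] × [0,1] → [0,1] be continuous functions. Then there exist a, b ∈ [0,1] such that a = ∫₀¹ q_X(x, b) dx and b = ∫₀¹ q_Y(a, y) dy. (Equivalently, the continuous map [0,1]² → [0,1]², (a,b) ↦ (∫₀¹ q_X(x,b) dx, ∫₀¹ q_Y(a,y) dy), has a fixed point; such a pair (a,b) is a generalised Nash equilibrium of the 2-player game on [0,1] × [0,1] in which both players' quantifiers are the integration quantifier p ↦ ∫₀¹ p.) -/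
/-! Each equilibrium condition determines one coordinate from the other, `a = F b` and `b = G a`, so
an equilibrium is a fixed point of `F ∘ G` on the interval containing `a`. The intermediate value
theorem therefore replaces Brouwer's theorem, and `b` may range over any bounded closed convex set
of a Banach space. Dominated convergence makes `F` and `G` continuous, and means with respect to a
probability measure stay in a closed convex set. -/

open MeasureTheory Set

theorem exists_eq_and_eq_of_mapsTo_Icc {α β : Type*} [ConditionallyCompleteLinearOrder α]
    [TopologicalSpace α] [OrderTopology α] [DenselyOrdered α] [TopologicalSpace β]
    {F : β → α} {G : α → β} {c d : α} {K : Set β} (hcd : c ≤ d)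
    (hF : ContinuousOn F K) (hG : ContinuousOn G (Icc c d))
    (hFm : MapsTo F K (Icc c d)) (hGm : MapsTo G (Icc c d) K) :
    ∃ a ∈ Icc c d, ∃ b ∈ K, a = F b ∧ b = G a := by
  obtain ⟨a, ha, hfix⟩ :=
    exists_mem_Icc_isFixedPt_of_mapsTo (hF.comp hG hGm) hcd (hFm.comp hGm)
  exact ⟨a, ha, G a, hGm ha, hfix.symm, rfl⟩

/-- A Carathéodory function `q` of a parameter `x ∈ s` and a random point `ω`: measurable in `ω`,
continuous in `x`, with values in `K`. It is the class of outcome functions whose mean outcome is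
well behaved in the parameter. The null set outside which `q x ω ∈ K` may depend on `x`, whereas the
one outside which `q · ω` is continuous may not. -/
structure IsCaratheodoryOn {X Ω E : Type*} [TopologicalSpace X] [MeasurableSpace Ω]
    [TopologicalSpace E] (q : X → Ω → E) (s : Set X) (K : Set E) (μ : Measure Ω) : Prop where
  aestronglyMeasurable : ∀ x ∈ s, AEStronglyMeasurable (q x) μ
  continuousOn : ∀ᵐ ω ∂μ, ContinuousOn (q · ω) s
  mem : ∀ x ∈ s, ∀ᵐ ω ∂μ, q x ω ∈ K

namespace IsCaratheodoryOn

theorem of_separately_continuousOn {X Ω E : Type*} [TopologicalSpace X] [TopologicalSpace Ω]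
    [MeasurableSpace Ω] [OpensMeasurableSpace Ω] [TopologicalSpace E]
    [TopologicalSpace.PseudoMetrizableSpace E] [SecondCountableTopologyEither Ω E]
    {q : X → Ω → E} {s : Set X} {t : Set Ω} {K : Set E} {μ : Measure Ω} (ht : MeasurableSet t)
    (hparam : ∀ ω ∈ t, ContinuousOn (q · ω) s) (hpoint : ∀ x ∈ s, ContinuousOn (q x) t)
    (hK : ∀ x ∈ s, ∀ ω ∈ t, q x ω ∈ K) :
    IsCaratheodoryOn q s K (μ.restrict t) where
  aestronglyMeasurable x hx := (hpoint x hx).aestronglyMeasurable ht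
  continuousOn := ae_restrict_of_forall_mem ht hparam
  mem x hx := ae_restrict_of_forall_mem ht (hK x hx)

variable {X Ω E : Type*} [TopologicalSpace X] [MeasurableSpace Ω] [NormedAddCommGroup E]
  {q : X → Ω → E} {s : Set X} {K : Set E} {μ : Measure Ω}

theorem integrable [IsFiniteMeasure μ] (hq : IsCaratheodoryOn q s K μ)
    (hK : Bornology.IsBounded K) {x : X} (hx : x ∈ s) : Integrable (q x) μ := by
  obtain ⟨C, hC⟩ := hK.exists_norm_le
  exact .of_bound (hq.aestronglyMeasurable x hx) C <| (hq.mem x hx).mono fun ω ↦ hC (q x ω)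

variable [NormedSpace ℝ E]

theorem continuousOn_integral [FirstCountableTopology X] [IsFiniteMeasure μ]
    (hq : IsCaratheodoryOn q s K μ) (hK : Bornology.IsBounded K) :
    ContinuousOn (fun x ↦ ∫ ω, q x ω ∂μ) s := by
  obtain ⟨C, hC⟩ := hK.exists_norm_le
  exact continuousOn_of_dominated hq.aestronglyMeasurable
    (fun x hx ↦ (hq.mem x hx).mono fun ω ↦ hC (q x ω)) (integrable_const C) hq.continuousOn

theorem mapsTo_integral [CompleteSpace E] [IsProbabilityMeasure μ]
    (hq : IsCaratheodoryOn q s K μ) (hconv : Convex ℝ K) (hclosed : IsClosed K)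
    (hK : Bornology.IsBounded K) : MapsTo (fun x ↦ ∫ ω, q x ω ∂μ) s K :=
  fun x hx ↦ hconv.integral_mem hclosed (hq.mem x hx) (hq.integrable hK hx)

end IsCaratheodoryOn

theorem stmt_15_general {Ω Ω' E : Type*} [MeasurableSpace Ω] [MeasurableSpace Ω']
    [NormedAddCommGroup E] [NormedSpace ℝ E] [CompleteSpace E]
    {μ : Measure Ω} {ν : Measure Ω'} [IsProbabilityMeasure μ] [IsProbabilityMeasure ν]
    {c d : ℝ} (hcd : c ≤ d) {K : Set E} (hconv : Convex ℝ K) (hclosed : IsClosed K)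
    (hbdd : Bornology.IsBounded K) {qX : Ω → E → ℝ} {qY : ℝ → Ω' → E}
    (hX : IsCaratheodoryOn (fun b x ↦ qX x b) K (Icc c d) μ)
    (hY : IsCaratheodoryOn qY (Icc c d) K ν) :
    ∃ a ∈ Icc c d, ∃ b ∈ K, a = ∫ x, qX x b ∂μ ∧ b = ∫ y, qY a y ∂ν :=
  exists_eq_and_eq_of_mapsTo_Icc hcd
    (hX.continuousOn_integral (Metric.isBounded_Icc c d)) (hY.continuousOn_integral hbdd)
    (hX.mapsTo_integral (convex_Icc c d) isClosed_Icc (Metric.isBounded_Icc c d))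
    (hY.mapsTo_integral hconv hclosed hbdd)

/-- Existence of a generalised Nash equilibrium for the 2-player game on
`[0,1] × [0,1]` with both quantifiers given by integration: for continuous
`q_X, q_Y : [0,1]² → [0,1]` there exist `a, b ∈ [0,1]` with
`a = ∫₀¹ q_X(x, b) dx` and `b = ∫₀¹ q_Y(a, y) dy`. -/
theorem stmt_15 (qX qY : ℝ × ℝ → ℝ)
    (hXc : ContinuousOn qX (Set.Icc (0 : ℝ) 1 ×ˢ Set.Icc (0 : ℝ) 1))
    (hYc : ContinuousOn qY (Set.Icc (0 : ℝ) 1 ×ˢ Set.Icc (0 : ℝ) 1))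
    (hXm : ∀ p ∈ Set.Icc (0 : ℝ) 1 ×ˢ Set.Icc (0 : ℝ) 1, qX p ∈ Set.Icc (0 : ℝ) 1)
    (hYm : ∀ p ∈ Set.Icc (0 : ℝ) 1 ×ˢ Set.Icc (0 : ℝ) 1, qY p ∈ Set.Icc (0 : ℝ) 1) :
    ∃ a ∈ Set.Icc (0 : ℝ) 1, ∃ b ∈ Set.Icc (0 : ℝ) 1,
      a = ∫ x in (0 : ℝ)..1, qX (x, b) ∧ b = ∫ y in (0 : ℝ)..1, qY (a, y) := by
  have : IsProbabilityMeasure (volume.restrict (Icc (0 : ℝ) 1)) := ⟨by simp⟩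
  simp only [intervalIntegral.integral_of_le zero_le_one, ← integral_Icc_eq_integral_Ioc]
  exact stmt_15_general zero_le_one (convex_Icc 0 1) isClosed_Icc (Metric.isBounded_Icc 0 1)
    (qX := qX.curry) (qY := qY.curry)
    (.of_separately_continuousOn measurableSet_Icc (fun _ hx ↦ .uncurry_left _ hx hXc)
      (fun _ hb ↦ .uncurry_right _ hb hXc) fun b hb x hx ↦ hXm (x, b) ⟨hx, hb⟩)
    (.of_separately_continuousOn measurableSet_Icc (fun _ hy ↦ .uncurry_right _ hy hYc)
      (fun _ ha ↦ .uncurry_left _ ha hYc) fun a ha y hy ↦ hYm (a, y) ⟨ha, hy⟩)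
end
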